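/- arXiv:0708.3310 — 6 statements merged into one kernel-verified Lean document; each statement's English description precedes it below -/
import Mathlib

section
/- Let n ≥ 3 be an integer, φ₀ > 0, and set a = φ₀^{-2(n-1)}. Then the function τ ↦ (a·τ^{2(n-1)} − 1)^{-1/2} is integrable on the interval (φ₀, ∞); in particular the improper integral S(φ₀) = ∫_{φ₀}^{∞} (a·τ^{2(n-1)} − 1)^{-1/2} dτ is finite. -/
/-!
Rescaling by `x = τ / φ₀` turns the integrand into `(x ^ p - 1) ^ (-s)` on `(1, ∞)`, with
`p = 2 * (n - 1)` and `s = 1 / 2`. Near the singular endpoint `x ^ p - 1 ≥ x - 1`, and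
`(x - 1) ^ (-s)` is integrable there because `s < 1`. Away from it `x ^ p - 1` is at least a
positive multiple of `x ^ p`, and `x ^ (-(p * s))` is integrable at infinity because `p * s > 1`.
-/

open MeasureTheory Set

section UnitRadius

variable {p s : ℝ}

lemma integrableOn_Ioc_sub_rpow {r : ℝ} (c b : ℝ) (hr : -1 < r) :
    IntegrableOn (fun x : ℝ => (x - c) ^ r) (Ioc c b) := by
  have h := (intervalIntegral.intervalIntegrable_rpow' (a := 0) (b := b - c) hr).comp_sub_right c
  rw [zero_add, sub_add_cancel] at h
  exact h.1

lemma integrableOn_Ioc_one_rpow_sub_one_rpow (b : ℝ) (hp : 1 ≤ p) (hs₀ : 0 ≤ s) (hs₁ : s < 1) :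
    IntegrableOn (fun x : ℝ => (x ^ p - 1) ^ (-s)) (Ioc 1 b) := by
  refine (integrableOn_Ioc_sub_rpow 1 b (neg_lt_neg hs₁)).mono'
    (Measurable.aestronglyMeasurable (by fun_prop)) ?_
  filter_upwards [ae_restrict_mem measurableSet_Ioc] with x hx
  have hbase_pos : 0 < x - 1 := sub_pos.2 hx.1
  have hbase_le : x - 1 ≤ x ^ p - 1 :=
    sub_le_sub_right (Real.self_le_rpow_of_one_le hx.1.le hp) 1
  rw [Real.norm_of_nonneg (Real.rpow_nonneg (hbase_pos.le.trans hbase_le) _)]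
  exact Real.rpow_le_rpow_of_nonpos hbase_pos hbase_le (neg_nonpos.2 hs₀)

lemma one_sub_rpow_neg_mul_rpow_le {b x : ℝ} (hb : 0 < b) (hbx : b ≤ x) (hp : 0 ≤ p) :
    (1 - b ^ (-p)) * x ^ p ≤ x ^ p - 1 := by
  have hone_le : 1 ≤ b ^ (-p) * x ^ p :=
    calc 1 = b ^ (-p) * b ^ p := by rw [← Real.rpow_add hb, neg_add_cancel, Real.rpow_zero]
      _ ≤ b ^ (-p) * x ^ p := by gcongr
  linarith

lemma integrableOn_Ioi_rpow_sub_one_rpow_of_one_lt {b : ℝ} (hb : 1 < b) (hp : 0 < p)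
    (hps : 1 < p * s) :
    IntegrableOn (fun x : ℝ => (x ^ p - 1) ^ (-s)) (Ioi b) := by
  have hb₀ : 0 < b := one_pos.trans hb
  have hs : 0 < s := pos_of_mul_pos_right (one_pos.trans hps) hp.le
  set C : ℝ := 1 - b ^ (-p)
  have hC : 0 < C := sub_pos.2 (Real.rpow_lt_one_of_one_lt_of_neg hb (neg_neg_of_pos hp))
  have hmajorant : IntegrableOn (fun x : ℝ => C ^ (-s) * x ^ (-(p * s))) (Ioi b) :=
    (integrableOn_Ioi_rpow_of_lt (neg_lt_neg hps) hb₀).const_mul _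
  refine hmajorant.mono' (Measurable.aestronglyMeasurable (by fun_prop)) ?_
  filter_upwards [ae_restrict_mem measurableSet_Ioi] with x hx
  have hx₀ : 0 < x := hb₀.trans hx
  have hbase_pos : 0 < C * x ^ p := by positivity
  have hbase_le : C * x ^ p ≤ x ^ p - 1 := one_sub_rpow_neg_mul_rpow_le hb₀ (le_of_lt hx) hp.le
  rw [Real.norm_of_nonneg (Real.rpow_nonneg (hbase_pos.le.trans hbase_le) _)]
  calc (x ^ p - 1) ^ (-s) ≤ (C * x ^ p) ^ (-s) :=
        Real.rpow_le_rpow_of_nonpos hbase_pos hbase_le (neg_nonpos.2 hs.le)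
    _ = C ^ (-s) * x ^ (-(p * s)) := by
        rw [Real.mul_rpow hC.le (by positivity), ← Real.rpow_mul hx₀.le, mul_neg]

lemma integrableOn_Ioi_one_rpow_sub_one_rpow (hs₀ : 0 < s) (hs₁ : s < 1) (hps : 1 < p * s) :
    IntegrableOn (fun x : ℝ => (x ^ p - 1) ^ (-s)) (Ioi 1) := by
  have hp₀ : 0 < p := pos_of_mul_pos_left (one_pos.trans hps) hs₀.le
  have hp₁ : 1 < p := hps.trans (mul_lt_of_lt_one_right hp₀ hs₁)
  rw [← Ioc_union_Ioi_eq_Ioi one_le_two]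
  exact (integrableOn_Ioc_one_rpow_sub_one_rpow 2 hp₁.le hs₀.le hs₁).union
    (integrableOn_Ioi_rpow_sub_one_rpow_of_one_lt one_lt_two hp₀ hps)

end UnitRadius

theorem catenoid_height_integral_finite_general {p s φ₀ a : ℝ} (hs₀ : 0 < s) (hs₁ : s < 1)
    (hps : 1 < p * s) (hφ₀ : 0 < φ₀) (ha : a = φ₀ ^ (-p)) :
    IntegrableOn (fun τ : ℝ => (a * τ ^ p - 1) ^ (-s)) (Ioi φ₀) := by
  have hscaled : IntegrableOn (fun τ : ℝ => ((φ₀⁻¹ * τ) ^ p - 1) ^ (-s)) (Ioi φ₀) := by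
    rw [integrableOn_Ioi_comp_mul_left_iff (fun x : ℝ => (x ^ p - 1) ^ (-s)) φ₀ (inv_pos.2 hφ₀),
      inv_mul_cancel₀ hφ₀.ne']
    exact integrableOn_Ioi_one_rpow_sub_one_rpow hs₀ hs₁ hps
  refine hscaled.congr_fun (fun τ hτ => ?_) measurableSet_Ioi
  have hτ₀ : 0 ≤ τ := (hφ₀.trans hτ).le
  simp only [ha, Real.mul_rpow (inv_nonneg.2 hφ₀.le) hτ₀, Real.inv_rpow hφ₀.le,
    Real.rpow_neg hφ₀.le]

/-- **Finite half-height of the higher-dimensional catenoid.**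
For `n ≥ 3` and `φ₀ > 0`, with `a = φ₀^(-2(n-1))`, the function
`τ ↦ (a·τ^(2(n-1)) − 1)^(-1/2)` is integrable on `(φ₀, ∞)`; in particular the improper
integral `S(φ₀) = ∫_{φ₀}^∞ (a·τ^(2(n-1)) − 1)^(-1/2) dτ` is finite. -/
theorem catenoid_height_integral_finite
    (n : ℕ) (hn : 3 ≤ n) (φ₀ : ℝ) (hφ₀ : 0 < φ₀)
    (a : ℝ) (ha : a = φ₀ ^ (-(2 * ((n : ℤ) - 1)))) :
    MeasureTheory.IntegrableOn
      (fun τ : ℝ => (a * τ ^ (2 * (n - 1)) - 1) ^ (-(1 / 2 : ℝ)))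
      (Set.Ioi φ₀) MeasureTheory.volume := by
  have hn' : (3 : ℝ) ≤ n := mod_cast hn
  have hp : ((2 * (n - 1) : ℕ) : ℝ) = 2 * ((n : ℝ) - 1) := by
    rw [Nat.cast_mul, Nat.cast_ofNat, Nat.cast_pred (by omega)]
  have ha' : a = φ₀ ^ (-(2 * ((n : ℝ) - 1))) := ha.trans (mod_cast (Real.rpow_intCast φ₀ _).symm)
  simpa only [← hp, Real.rpow_natCast] using
    catenoid_height_integral_finite_general one_half_pos one_half_lt_one (by linarith) hφ₀ ha'
end

section
/- Let n ≥ 3 be an integer, φ₀ > 0, a = φ₀^{-2(n-1)}, and S = ∫_{φ₀}^{∞} (a·τ^{2(n-1)} − 1)^{-1/2} dτ. Then there exists a twice continuously differentiable function φ : (−S, S) → ℝ with φ > 0, φ(0) = φ₀, φ'(0) = 0, satisfying φ''(s) = (n-1)(1+φ'(s)²)/φ(s) for all s ∈ (−S, S), and moreover φ(s) → +∞ as s → S from the left and as s → −S from the right. -/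
/-!
Write `m = n - 1` and parametrize the profile by its slope `t = φ'`. The first integral
`(φ/φ₀)^(2m) = 1 + φ'²` gives `φ = φ₀ (1 + t²)^(1/(2m))`, hence
`ds = dφ/t = (φ₀/m) (1 + t²)^(1/(2m) - 1) dt`, whose density, unlike the integrand defining `S`, is
smooth at `t = 0`. It is even, positive and, for `m > 1`, integrable, so its primitive `s(t)` is an
increasing bijection of `ℝ` onto `(-S', S')` with `S'` the integral of the density over `(0, ∞)`,
and `S' = S` by the substitution `τ = φ₀ (1 + t²)^(1/(2m))`. If `T` inverts `s`, then
`φ = φ₀ (1 + T²)^(1/(2m))` satisfies `φ' = T` and `φ'' = T' = 1/s'(T) = m (1 + T²)/φ`, and `φ`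
blows up at `±S` because `|T|` does.
-/

open MeasureTheory Filter

section Preliminaries

open Set Topology

theorem range_eq_Ioo_of_strictMono_of_tendsto {α β : Type*}
    [LinearOrder α] [NoMinOrder α] [NoMaxOrder α] [Nonempty α]
    [TopologicalSpace α] [PreconnectedSpace α]
    [LinearOrder β] [TopologicalSpace β] [OrderTopology β] {f : α → β} {a b : β}
    (hf : StrictMono f) (hcont : Continuous f)
    (ha : Tendsto f atBot (𝓝 a)) (hb : Tendsto f atTop (𝓝 b)) :
    range f = Ioo a b := by
  apply Subset.antisymm
  · rintro _ ⟨t, rfl⟩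
    obtain ⟨r, hr⟩ := exists_lt t
    obtain ⟨u, hu⟩ := exists_gt t
    exact ⟨(hf.monotone.le_of_tendsto ha r).trans_lt (hf hr),
      (hf hu).trans_le (hf.monotone.ge_of_tendsto hb u)⟩
  · rw [← image_univ]
    exact isPreconnected_univ.intermediate_value_Ioo (by simp) (by simp) hcont.continuousOn ha hb

theorem tendsto_nhdsLT_atTop_of_leftInverse {α β : Type*} [LinearOrder α]
    [LinearOrder β] [TopologicalSpace β] [OrderTopology β] {f : α → β} {g : β → α} {a b : β}
    (hf : StrictMono f) (hrange : range f = Ioo a b) (hg : Function.LeftInverse g f) :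
    Tendsto g (𝓝[<] b) atTop := by
  refine tendsto_atTop.2 fun M => ?_
  have hM : f M ∈ Ioo a b := hrange ▸ mem_range_self M
  filter_upwards [Ioo_mem_nhdsLT hM.2] with x hx
  obtain ⟨t, rfl⟩ : x ∈ range f := hrange ▸ ⟨hM.1.trans hx.1, hx.2⟩
  rw [hg t]
  exact (hf.lt_iff_lt.1 hx.1).le

theorem tendsto_nhdsGT_atBot_of_leftInverse {α β : Type*} [LinearOrder α]
    [LinearOrder β] [TopologicalSpace β] [OrderTopology β] {f : α → β} {g : β → α} {a b : β}
    (hf : StrictMono f) (hrange : range f = Ioo a b) (hg : Function.LeftInverse g f) :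
    Tendsto g (𝓝[>] a) atBot :=
  tendsto_nhdsLT_atTop_of_leftInverse (α := αᵒᵈ) (β := βᵒᵈ) (a := OrderDual.toDual b) hf.dual
    (hrange.trans Ioo_toDual.symm) hg

theorem tendsto_intervalIntegral_atBot_of_even {E : Type*} [NormedAddCommGroup E]
    [NormedSpace ℝ E] {f : ℝ → E} (heven : Function.Even f) (hf : IntegrableOn f (Ioi 0)) :
    Tendsto (fun t => ∫ x in (0 : ℝ)..t, f x) atBot (𝓝 (-∫ x in Ioi 0, f x)) := by
  have hodd (t : ℝ) : ∫ x in (0 : ℝ)..t, f x = -∫ x in (0 : ℝ)..-t, f x := by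
    have h := intervalIntegral.integral_comp_neg (a := 0) (b := t) f
    simp only [heven _, neg_zero] at h
    rw [h, intervalIntegral.integral_symm]
  exact (intervalIntegral_tendsto_integral_Ioi 0 hf tendsto_neg_atBot_atTop).neg.congr
    fun t => (hodd t).symm

theorem contDiffOn_succ_of_hasDerivAt {𝕜 F : Type*} [NontriviallyNormedField 𝕜]
    [NormedAddCommGroup F] [NormedSpace 𝕜 F] {f f' : 𝕜 → F} {s : Set 𝕜} {k : ℕ∞}
    (hs : IsOpen s) (hf : ∀ x ∈ s, HasDerivAt f (f' x) x) (hf' : ContDiffOn 𝕜 k f' s) :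
    ContDiffOn 𝕜 (k + 1) f s :=
  (contDiffOn_succ_iff_deriv_of_isOpen hs).2
    ⟨fun x hx => (hf x hx).differentiableAt.differentiableWithinAt, by simp,
      hf'.congr fun x hx => (hf x hx).deriv⟩

end Preliminaries

section Catenoid

open Set Topology Bornology

/-- The radius `φ` of the catenoid with neck radius `φ₀` at the point where its profile has slope
`φ' = t`; the real parameter `m` stands for `n - 1`. -/
noncomputable def catenoidRadius (φ₀ m t : ℝ) : ℝ :=
  φ₀ * (1 + t ^ 2) ^ (1 / (2 * m))

/-- The derivative `ds/dt` of the height of the catenoid with respect to the slope `t` of its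
profile, obtained from `catenoidRadius` through `ds = dφ/t`. -/
noncomputable def catenoidHeightDensity (φ₀ m t : ℝ) : ℝ :=
  φ₀ / m * (1 + t ^ 2) ^ (1 / (2 * m) - 1)

/-- The signed height `s` of the catenoid above its neck at the point where its profile has
slope `t`. -/
noncomputable def catenoidHeight (φ₀ m t : ℝ) : ℝ :=
  ∫ x in (0 : ℝ)..t, catenoidHeightDensity φ₀ m x

/-- The half-height `S` of the catenoid, as an integral over the slope. For `0 < m ≤ 1` and
`φ₀ ≠ 0` the density is not integrable and this is the junk value `0`. -/
noncomputable def catenoidHalfHeight (φ₀ m : ℝ) : ℝ :=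
  ∫ t in Ioi 0, catenoidHeightDensity φ₀ m t

/-- The slope of the catenoid profile as a function of the height `s`, the inverse of
`catenoidHeight`; its values for `s` outside `(-S, S)` are arbitrary. -/
noncomputable def catenoidSlope (φ₀ m : ℝ) : ℝ → ℝ :=
  Function.invFun (catenoidHeight φ₀ m)

/-- The profile `φ` of the catenoid as a function of the height `s`; its values for `s` outside
`(-S, S)` are arbitrary. -/
noncomputable def catenoidProfile (φ₀ m s : ℝ) : ℝ :=
  catenoidRadius φ₀ m (catenoidSlope φ₀ m s)

variable {φ₀ m : ℝ}

theorem catenoidRadius_pos (hφ₀ : 0 < φ₀) (t : ℝ) : 0 < catenoidRadius φ₀ m t := by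
  unfold catenoidRadius
  positivity

@[simp]
theorem catenoidRadius_zero : catenoidRadius φ₀ m 0 = φ₀ := by
  simp [catenoidRadius]

theorem catenoidRadius_first_integral (hφ₀ : 0 < φ₀) (hm : m ≠ 0) (t : ℝ) :
    φ₀ ^ (-(2 * m)) * catenoidRadius φ₀ m t ^ (2 * m) = 1 + t ^ 2 := by
  rw [catenoidRadius, Real.mul_rpow hφ₀.le (by positivity), ← Real.rpow_mul (by positivity),
    one_div_mul_cancel (by positivity), Real.rpow_one, ← mul_assoc, ← Real.rpow_add hφ₀,
    neg_add_cancel, Real.rpow_zero, one_mul]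

theorem hasDerivAt_catenoidRadius (hm : m ≠ 0) (t : ℝ) :
    HasDerivAt (catenoidRadius φ₀ m) (t * catenoidHeightDensity φ₀ m t) t := by
  have hsq : HasDerivAt (fun t : ℝ => 1 + t ^ 2) (2 * t) t := by
    simpa using (hasDerivAt_pow 2 t).const_add 1
  refine ((hsq.rpow_const (p := 1 / (2 * m)) (Or.inl (by positivity))).const_mul φ₀).congr_deriv ?_
  rw [catenoidHeightDensity]
  field_simp

theorem continuous_catenoidRadius (hm : m ≠ 0) : Continuous (catenoidRadius φ₀ m) :=
  continuous_iff_continuousAt.2 fun t => (hasDerivAt_catenoidRadius hm t).continuousAt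

theorem tendsto_catenoidRadius_cobounded (hφ₀ : 0 < φ₀) (hm : 0 < m) :
    Tendsto (catenoidRadius φ₀ m) (cobounded ℝ) atTop := by
  have hsq : Tendsto (fun t : ℝ => 1 + t ^ 2) (cobounded ℝ) atTop := by
    simpa using tendsto_atTop_add_const_left _ 1
      ((tendsto_pow_atTop two_ne_zero).comp (tendsto_norm_cobounded_atTop (E := ℝ)))
  exact ((tendsto_rpow_atTop (by positivity)).comp hsq).const_mul_atTop hφ₀

theorem catenoidHeightDensity_pos (hφ₀ : 0 < φ₀) (hm : 0 < m) (t : ℝ) :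
    0 < catenoidHeightDensity φ₀ m t := by
  unfold catenoidHeightDensity
  positivity

theorem even_catenoidHeightDensity : Function.Even (catenoidHeightDensity φ₀ m) := fun t => by
  simp [catenoidHeightDensity]

theorem continuous_catenoidHeightDensity : Continuous (catenoidHeightDensity φ₀ m) :=
  continuous_const.mul <| Continuous.rpow_const (by fun_prop) fun _ => Or.inl (by positivity)

theorem integrable_catenoidHeightDensity (hm : 1 < m) :
    Integrable (catenoidHeightDensity φ₀ m) := by
  have hexp : 1 / (2 * m) - 1 = -(2 - 1 / m) / 2 := by
    field_simp
    ring
  have hdecay : (Module.finrank ℝ ℝ : ℝ) < 2 - 1 / m := by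
    have : 1 / m < 1 := (div_lt_one (by linarith)).2 hm
    rw [Module.finrank_self, Nat.cast_one]
    linarith
  unfold catenoidHeightDensity
  simpa only [hexp, Real.norm_eq_abs, sq_abs] using
    (integrable_rpow_neg_one_add_norm_sq (μ := volume) hdecay).const_mul (φ₀ / m)

theorem inv_catenoidHeightDensity (t : ℝ) :
    (catenoidHeightDensity φ₀ m t)⁻¹ = m * (1 + t ^ 2) / catenoidRadius φ₀ m t := by
  have hpos : 0 < 1 + t ^ 2 := by positivity
  rw [catenoidHeightDensity, catenoidRadius, Real.rpow_sub_one hpos.ne']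
  simp only [div_eq_mul_inv, mul_inv, inv_inv]
  ring

theorem strictMonoOn_catenoidRadius (hφ₀ : 0 < φ₀) (hm : 0 < m) :
    StrictMonoOn (catenoidRadius φ₀ m) (Ici 0) := by
  refine strictMonoOn_of_hasDerivWithinAt_pos (convex_Ici 0)
    (continuous_catenoidRadius hm.ne').continuousOn
    (fun t _ => (hasDerivAt_catenoidRadius hm.ne' t).hasDerivWithinAt) fun t ht => ?_
  rw [interior_Ici] at ht
  exact mul_pos ht (catenoidHeightDensity_pos hφ₀ hm t)

theorem image_catenoidRadius_Ioi (hφ₀ : 0 < φ₀) (hm : 0 < m) :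
    catenoidRadius φ₀ m '' Ioi 0 = Ioi φ₀ := by
  simpa using (continuous_catenoidRadius hm.ne').continuousOn.image_Ioi_of_strictMonoOn
    (strictMonoOn_catenoidRadius hφ₀ hm)
    ((tendsto_catenoidRadius_cobounded hφ₀ hm).mono_left IsOrderBornology.atTop_le_cobounded)

theorem integral_Ioi_eq_catenoidHalfHeight (hφ₀ : 0 < φ₀) (hm : 0 < m) :
    ∫ τ in Ioi φ₀, (φ₀ ^ (-(2 * m)) * τ ^ (2 * m) - 1) ^ (-(1 / 2 : ℝ)) =
      catenoidHalfHeight φ₀ m := by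
  rw [← image_catenoidRadius_Ioi hφ₀ hm, integral_image_eq_integral_deriv_smul_of_monotoneOn
    measurableSet_Ioi (fun t _ => (hasDerivAt_catenoidRadius hm.ne' t).hasDerivWithinAt)
    ((strictMonoOn_catenoidRadius hφ₀ hm).monotoneOn.mono Ioi_subset_Ici_self)]
  refine setIntegral_congr_fun measurableSet_Ioi fun t (ht : 0 < t) => ?_
  have hroot : (t ^ 2) ^ (-(1 / 2 : ℝ)) = t⁻¹ := by
    rw [Real.rpow_neg (by positivity), ← Real.sqrt_eq_rpow, Real.sqrt_sq ht.le]
  simp only [smul_eq_mul]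
  rw [catenoidRadius_first_integral hφ₀ hm.ne', add_sub_cancel_left, hroot]
  field_simp

theorem hasStrictDerivAt_catenoidHeight (t : ℝ) :
    HasStrictDerivAt (catenoidHeight φ₀ m) (catenoidHeightDensity φ₀ m t) t :=
  continuous_catenoidHeightDensity.integral_hasStrictDerivAt 0 t

theorem strictMono_catenoidHeight (hφ₀ : 0 < φ₀) (hm : 0 < m) :
    StrictMono (catenoidHeight φ₀ m) :=
  strictMono_of_hasDerivAt_pos (fun t => (hasStrictDerivAt_catenoidHeight t).hasDerivAt)
    (catenoidHeightDensity_pos hφ₀ hm)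

@[simp]
theorem catenoidHeight_zero : catenoidHeight φ₀ m 0 = 0 :=
  intervalIntegral.integral_same

theorem range_catenoidHeight (hφ₀ : 0 < φ₀) (hm : 1 < m) :
    range (catenoidHeight φ₀ m) = Ioo (-catenoidHalfHeight φ₀ m) (catenoidHalfHeight φ₀ m) := by
  have hint : IntegrableOn (catenoidHeightDensity φ₀ m) (Ioi 0) :=
    (integrable_catenoidHeightDensity hm).integrableOn
  have hcont : Continuous (catenoidHeight φ₀ m) :=
    continuous_iff_continuousAt.2 fun t =>
      (hasStrictDerivAt_catenoidHeight t).hasDerivAt.continuousAt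
  exact range_eq_Ioo_of_strictMono_of_tendsto (strictMono_catenoidHeight hφ₀ (by linarith)) hcont
    (tendsto_intervalIntegral_atBot_of_even even_catenoidHeightDensity hint)
    (intervalIntegral_tendsto_integral_Ioi 0 hint tendsto_id)

theorem zero_mem_Ioo_catenoidHalfHeight (hφ₀ : 0 < φ₀) (hm : 1 < m) :
    0 ∈ Ioo (-catenoidHalfHeight φ₀ m) (catenoidHalfHeight φ₀ m) :=
  range_catenoidHeight hφ₀ hm ▸ ⟨0, catenoidHeight_zero⟩

theorem leftInverse_catenoidSlope (hφ₀ : 0 < φ₀) (hm : 0 < m) :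
    Function.LeftInverse (catenoidSlope φ₀ m) (catenoidHeight φ₀ m) :=
  Function.leftInverse_invFun (strictMono_catenoidHeight hφ₀ hm).injective

theorem catenoidSlope_zero (hφ₀ : 0 < φ₀) (hm : 0 < m) : catenoidSlope φ₀ m 0 = 0 := by
  simpa using leftInverse_catenoidSlope hφ₀ hm 0

theorem hasDerivAt_catenoidSlope (hφ₀ : 0 < φ₀) (hm : 1 < m) {s : ℝ}
    (hs : s ∈ Ioo (-catenoidHalfHeight φ₀ m) (catenoidHalfHeight φ₀ m)) :
    HasDerivAt (catenoidSlope φ₀ m) (catenoidHeightDensity φ₀ m (catenoidSlope φ₀ m s))⁻¹ s := by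
  have hm₀ : 0 < m := by linarith
  rw [← range_catenoidHeight hφ₀ hm] at hs
  obtain ⟨t, rfl⟩ := hs
  rw [leftInverse_catenoidSlope hφ₀ hm₀ t]
  exact ((hasStrictDerivAt_catenoidHeight t).to_local_left_inverse
    (catenoidHeightDensity_pos hφ₀ hm₀ t).ne'
    (Eventually.of_forall (leftInverse_catenoidSlope hφ₀ hm₀))).hasDerivAt

theorem contDiffOn_one_catenoidSlope (hφ₀ : 0 < φ₀) (hm : 1 < m) :
    ContDiffOn ℝ 1 (catenoidSlope φ₀ m)
      (Ioo (-catenoidHalfHeight φ₀ m) (catenoidHalfHeight φ₀ m)) := by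
  have hcont : ContinuousOn (catenoidSlope φ₀ m)
      (Ioo (-catenoidHalfHeight φ₀ m) (catenoidHalfHeight φ₀ m)) := fun s hs =>
    (hasDerivAt_catenoidSlope hφ₀ hm hs).continuousAt.continuousWithinAt
  have hderiv := (continuous_catenoidHeightDensity.comp_continuousOn hcont).inv₀ fun s _ =>
    (catenoidHeightDensity_pos hφ₀ (by linarith) (catenoidSlope φ₀ m s)).ne'
  exact contDiffOn_succ_of_hasDerivAt (k := 0) isOpen_Ioo
    (fun s hs => hasDerivAt_catenoidSlope hφ₀ hm hs) (contDiffOn_zero.2 hderiv)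

theorem catenoidProfile_zero (hφ₀ : 0 < φ₀) (hm : 0 < m) : catenoidProfile φ₀ m 0 = φ₀ := by
  rw [catenoidProfile, catenoidSlope_zero hφ₀ hm, catenoidRadius_zero]

theorem hasDerivAt_catenoidProfile (hφ₀ : 0 < φ₀) (hm : 1 < m) {s : ℝ}
    (hs : s ∈ Ioo (-catenoidHalfHeight φ₀ m) (catenoidHalfHeight φ₀ m)) :
    HasDerivAt (catenoidProfile φ₀ m) (catenoidSlope φ₀ m s) s := by
  have hm₀ : 0 < m := by linarith
  have h := (hasDerivAt_catenoidRadius (φ₀ := φ₀) hm₀.ne' (catenoidSlope φ₀ m s)).comp s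
    (hasDerivAt_catenoidSlope hφ₀ hm hs)
  rwa [mul_inv_cancel_right₀ (catenoidHeightDensity_pos hφ₀ hm₀ _).ne'] at h

theorem contDiffOn_two_catenoidProfile (hφ₀ : 0 < φ₀) (hm : 1 < m) :
    ContDiffOn ℝ 2 (catenoidProfile φ₀ m)
      (Ioo (-catenoidHalfHeight φ₀ m) (catenoidHalfHeight φ₀ m)) := by
  rw [← one_add_one_eq_two]
  exact contDiffOn_succ_of_hasDerivAt (k := 1) isOpen_Ioo
    (fun s hs => hasDerivAt_catenoidProfile hφ₀ hm hs) (contDiffOn_one_catenoidSlope hφ₀ hm)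

theorem deriv_deriv_catenoidProfile (hφ₀ : 0 < φ₀) (hm : 1 < m) {s : ℝ}
    (hs : s ∈ Ioo (-catenoidHalfHeight φ₀ m) (catenoidHalfHeight φ₀ m)) :
    deriv (deriv (catenoidProfile φ₀ m)) s =
      m * (1 + deriv (catenoidProfile φ₀ m) s ^ 2) / catenoidProfile φ₀ m s := by
  have hderiv : deriv (catenoidProfile φ₀ m) =ᶠ[𝓝 s] catenoidSlope φ₀ m :=
    eventually_of_mem (isOpen_Ioo.mem_nhds hs) fun x hx =>
      (hasDerivAt_catenoidProfile hφ₀ hm hx).deriv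
  rw [hderiv.deriv_eq, hderiv.eq_of_nhds, (hasDerivAt_catenoidSlope hφ₀ hm hs).deriv]
  exact inv_catenoidHeightDensity _

theorem tendsto_catenoidProfile_nhdsLT (hφ₀ : 0 < φ₀) (hm : 1 < m) :
    Tendsto (catenoidProfile φ₀ m) (𝓝[<] catenoidHalfHeight φ₀ m) atTop := by
  have hm₀ : 0 < m := by linarith
  exact (tendsto_catenoidRadius_cobounded hφ₀ hm₀).comp <|
    (tendsto_nhdsLT_atTop_of_leftInverse (strictMono_catenoidHeight hφ₀ hm₀)
      (range_catenoidHeight hφ₀ hm) (leftInverse_catenoidSlope hφ₀ hm₀)).mono_right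
      IsOrderBornology.atTop_le_cobounded

theorem tendsto_catenoidProfile_nhdsGT (hφ₀ : 0 < φ₀) (hm : 1 < m) :
    Tendsto (catenoidProfile φ₀ m) (𝓝[>] (-catenoidHalfHeight φ₀ m)) atTop := by
  have hm₀ : 0 < m := by linarith
  exact (tendsto_catenoidRadius_cobounded hφ₀ hm₀).comp <|
    (tendsto_nhdsGT_atBot_of_leftInverse (strictMono_catenoidHeight hφ₀ hm₀)
      (range_catenoidHeight hφ₀ hm) (leftInverse_catenoidSlope hφ₀ hm₀)).mono_right
      IsOrderBornology.atBot_le_cobounded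

end Catenoid

theorem catenoid_profile_exists_general
    (m : ℝ) (hm : 1 < m) (φ₀ : ℝ) (hφ₀ : 0 < φ₀) (a : ℝ) (ha : a = φ₀ ^ (-(2 * m)))
    (S : ℝ) (hS : S = ∫ τ in Set.Ioi φ₀, (a * τ ^ (2 * m) - 1) ^ (-(1 / 2 : ℝ))) :
    ∃ φ : ℝ → ℝ,
      ContDiffOn ℝ 2 φ (Set.Ioo (-S) S) ∧
      (∀ s ∈ Set.Ioo (-S) S, 0 < φ s) ∧
      φ 0 = φ₀ ∧ deriv φ 0 = 0 ∧
      (∀ s ∈ Set.Ioo (-S) S, deriv (deriv φ) s = m * (1 + (deriv φ s) ^ 2) / φ s) ∧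
      Tendsto φ (nhdsWithin S (Set.Iio S)) atTop ∧
      Tendsto φ (nhdsWithin (-S) (Set.Ioi (-S))) atTop := by
  have hm₀ : 0 < m := by linarith
  obtain rfl : S = catenoidHalfHeight φ₀ m := by
    rw [hS, ha, integral_Ioi_eq_catenoidHalfHeight hφ₀ hm₀]
  have hderiv₀ : deriv (catenoidProfile φ₀ m) 0 = 0 := by
    rw [(hasDerivAt_catenoidProfile hφ₀ hm (zero_mem_Ioo_catenoidHalfHeight hφ₀ hm)).deriv,
      catenoidSlope_zero hφ₀ hm₀]
  exact ⟨catenoidProfile φ₀ m, contDiffOn_two_catenoidProfile hφ₀ hm,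
    fun s _ => catenoidRadius_pos hφ₀ _, catenoidProfile_zero hφ₀ hm₀, hderiv₀,
    fun s hs => deriv_deriv_catenoidProfile hφ₀ hm hs,
    tendsto_catenoidProfile_nhdsLT hφ₀ hm, tendsto_catenoidProfile_nhdsGT hφ₀ hm⟩

/-- **Existence of the catenoid profile on its maximal interval.**
For `n ≥ 3`, `φ₀ > 0`, `a = φ₀^(-2(n-1))` and
`S = ∫_{φ₀}^∞ (a·τ^(2(n-1)) − 1)^(-1/2) dτ`, there is a `C²` function
`φ : (−S, S) → ℝ`, positive, with `φ 0 = φ₀`, `φ' 0 = 0`, solving the catenoid ODE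
`φ'' = (n-1)(1+φ'²)/φ` on `(−S, S)`, and `φ(s) → +∞` as `s → S⁻` and as `s → (−S)⁺`. -/
theorem catenoid_profile_exists
    (n : ℕ) (hn : 3 ≤ n) (φ₀ : ℝ) (hφ₀ : 0 < φ₀)
    (a : ℝ) (ha : a = φ₀ ^ (-(2 * ((n : ℤ) - 1))))
    (S : ℝ)
    (hS : S = ∫ τ in Set.Ioi φ₀, (a * τ ^ (2 * (n - 1)) - 1) ^ (-(1 / 2 : ℝ))) :
    ∃ φ : ℝ → ℝ,
      ContDiffOn ℝ 2 φ (Set.Ioo (-S) S) ∧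
      (∀ s ∈ Set.Ioo (-S) S, 0 < φ s) ∧
      φ 0 = φ₀ ∧ deriv φ 0 = 0 ∧
      (∀ s ∈ Set.Ioo (-S) S,
        deriv (deriv φ) s = ((n : ℝ) - 1) * (1 + (deriv φ s) ^ 2) / φ s) ∧
      Tendsto φ (nhdsWithin S (Set.Iio S)) atTop ∧
      Tendsto φ (nhdsWithin (-S) (Set.Ioi (-S))) atTop := by
  have hexp : ((2 * (n - 1) : ℕ) : ℝ) = 2 * ((n : ℝ) - 1) := by
    rw [Nat.cast_mul, Nat.cast_pred (by lia), Nat.cast_two]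
  exact catenoid_profile_exists_general (n - 1) (by rify at hn; linarith) φ₀ hφ₀
    a (by exact_mod_cast ha.trans (Real.rpow_intCast _ _).symm)
    S (by simpa only [← Real.rpow_natCast, hexp] using hS)
end

section
/- Let n ≥ 3 be an integer, φ₀ > 0, a = φ₀^{-2(n-1)}, and let φ : I → ℝ be a twice-differentiable positive function on an open interval I containing 0 satisfying φ''(s) = (n-1)(1+φ'(s)²)/φ(s), φ(0) = φ₀, φ'(0) = 0. Then for every s ∈ I, n(n-1)/(φ(s)²(1+φ'(s)²)) = n(n-1)·φ₀^{2(n-1)}·φ(s)^{-2n}. In particular this quantity is strictly positive everywhere. -/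
/-!
Along a solution of `φ'' = c (1 + φ'²) / φ` the logarithmic derivative of `1 + φ'²` is `2 c φ' / φ`,
which is also that of `φ ^ (2 c)`. Their quotient is therefore a first integral; comparing its value
at `s` with its value at the base point, for `c = n - 1`, expresses `1 + φ'²` through `φ` alone.
-/

/-- The first integral `(1 + φ'²) φ^(-2c)` of the equation `φ'' = c (1 + φ'²) / φ`, with a real
exponent so that `c` need not be an integer. For the catenoid `c = n - 1`, and its value is
`a = φ₀^(-2(n-1))` when `φ 0 = φ₀` and `φ' 0 = 0`. -/
noncomputable def catenoidFirstIntegral (c : ℝ) (φ φ' : ℝ → ℝ) (s : ℝ) : ℝ :=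
  (1 + φ' s ^ 2) * φ s ^ (-(2 * c))

theorem hasDerivWithinAt_catenoidFirstIntegral {c : ℝ} {I : Set ℝ} {φ φ' : ℝ → ℝ} {s : ℝ}
    (hne : φ s ≠ 0) (hφ : HasDerivWithinAt φ (φ' s) I s)
    (hφ' : HasDerivWithinAt φ' (c * (1 + φ' s ^ 2) / φ s) I s) :
    HasDerivWithinAt (catenoidFirstIntegral c φ φ') 0 I s := by
  refine (((hφ'.fun_pow 2).const_add 1).mul (hφ.rpow_const (Or.inl hne))).congr_deriv ?_
  rw [Real.rpow_sub_one hne]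
  field_simp
  ring

theorem catenoidFirstIntegral_eq {c : ℝ} {I : Set ℝ} (hI : Convex ℝ I) {φ φ' : ℝ → ℝ}
    (hne : ∀ s ∈ I, φ s ≠ 0) (hφ : ∀ s ∈ I, HasDerivWithinAt φ (φ' s) I s)
    (hφ' : ∀ s ∈ I, HasDerivWithinAt φ' (c * (1 + φ' s ^ 2) / φ s) I s)
    {s t : ℝ} (hs : s ∈ I) (ht : t ∈ I) :
    catenoidFirstIntegral c φ φ' s = catenoidFirstIntegral c φ φ' t := by
  have hbound := hI.norm_image_sub_le_of_norm_hasDerivWithin_le (C := 0)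
    (fun x hx => hasDerivWithinAt_catenoidFirstIntegral (hne x hx) (hφ x hx) (hφ' x hx))
    (fun _ _ => norm_zero.le) ht hs
  rwa [zero_mul, norm_le_zero_iff, sub_eq_zero] at hbound

theorem inv_sq_mul_one_add_sq_eq (n : ℝ) {φ : ℝ → ℝ} (φ' : ℝ → ℝ) {s : ℝ} (hpos : 0 < φ s) :
    (φ s ^ 2 * (1 + φ' s ^ 2))⁻¹ =
      (catenoidFirstIntegral (n - 1) φ φ' s)⁻¹ * φ s ^ (-(2 * n)) := by
  have hexp : φ s ^ (-(2 * (n - 1))) = φ s ^ (-(2 * n)) * φ s ^ 2 := by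
    rw [← Real.rpow_add_natCast hpos.ne']
    congr 1
    push_cast
    ring
  rw [catenoidFirstIntegral, hexp]
  field_simp

theorem catenoid_second_fundamental_form_norm_general {n : ℝ} (hn : 1 < n)
    {I : Set ℝ} (hI : Convex ℝ I) {φ φ' : ℝ → ℝ} (hpos : ∀ s ∈ I, 0 < φ s)
    (hφ : ∀ s ∈ I, HasDerivWithinAt φ (φ' s) I s)
    (hφ' : ∀ s ∈ I, HasDerivWithinAt φ' ((n - 1) * (1 + φ' s ^ 2) / φ s) I s)
    {s₀ s : ℝ} (hs₀ : s₀ ∈ I) (hs : s ∈ I) :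
    n * (n - 1) / (φ s ^ 2 * (1 + φ' s ^ 2)) =
        n * (n - 1) * (φ s₀ ^ (2 * (n - 1)) / (1 + φ' s₀ ^ 2)) * φ s ^ (-(2 * n)) ∧
      0 < n * (n - 1) / (φ s ^ 2 * (1 + φ' s ^ 2)) := by
  have hφs := hpos s hs
  have hnum : 0 < n * (n - 1) := mul_pos (by linarith) (by linarith)
  have hinv : (catenoidFirstIntegral (n - 1) φ φ' s₀)⁻¹ =
      φ s₀ ^ (2 * (n - 1)) / (1 + φ' s₀ ^ 2) := by
    rw [catenoidFirstIntegral, Real.rpow_neg (hpos s₀ hs₀).le, ← div_eq_mul_inv, inv_div]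
  refine ⟨?_, div_pos hnum (by positivity)⟩
  rw [div_eq_mul_inv, inv_sq_mul_one_add_sq_eq n φ' hφs,
    catenoidFirstIntegral_eq hI (fun t ht => (hpos t ht).ne') hφ hφ' hs hs₀, hinv, ← mul_assoc]

theorem rpow_two_mul_natCast_sub_one (x : ℝ) {n : ℕ} (hn : 1 ≤ n) :
    x ^ (2 * ((n : ℝ) - 1)) = x ^ (2 * (n - 1)) := by
  rw [← Real.rpow_natCast, Nat.cast_mul, Nat.cast_ofNat, Nat.cast_sub hn, Nat.cast_one]

theorem rpow_neg_two_mul_natCast (x : ℝ) (n : ℕ) :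
    x ^ (-(2 * (n : ℝ))) = x ^ (-(2 * (n : ℤ))) := by
  rw [← Real.rpow_intCast, Int.cast_neg, Int.cast_mul, Int.cast_ofNat, Int.cast_natCast]

/-- **The squared norm of the second fundamental form of the catenoid.**
If `φ` solves the catenoid ODE on an open interval `I` containing `0` with `φ 0 = φ₀ > 0`
and `φ' 0 = 0`, then `n(n-1)/(φ²(1+φ'²)) = n(n-1)·φ₀^(2(n-1))·φ^(-2n)` on `I`, and this
quantity is strictly positive everywhere on `I`. -/
theorem catenoid_second_fundamental_form_norm
    (n : ℕ) (hn : 3 ≤ n) (φ₀ : ℝ) (hφ₀ : 0 < φ₀)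
    (a : ℝ) (ha : a = φ₀ ^ (-(2 * ((n : ℤ) - 1))))
    (I : Set ℝ) (hIopen : IsOpen I) (hIconv : Convex ℝ I) (h0I : (0 : ℝ) ∈ I)
    (φ φ' φ'' : ℝ → ℝ)
    (hpos : ∀ s ∈ I, 0 < φ s)
    (hderiv1 : ∀ s ∈ I, HasDerivAt φ (φ' s) s)
    (hderiv2 : ∀ s ∈ I, HasDerivAt φ' (φ'' s) s)
    (hode : ∀ s ∈ I, φ'' s = ((n : ℝ) - 1) * (1 + (φ' s) ^ 2) / φ s)
    (hinit : φ 0 = φ₀) (hinit' : φ' 0 = 0) :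
    ∀ s ∈ I,
      ((n : ℝ) * ((n : ℝ) - 1)) / ((φ s) ^ 2 * (1 + (φ' s) ^ 2))
        = (n : ℝ) * ((n : ℝ) - 1) * φ₀ ^ (2 * (n - 1)) * (φ s) ^ (-(2 * (n : ℤ))) ∧
      0 < ((n : ℝ) * ((n : ℝ) - 1)) / ((φ s) ^ 2 * (1 + (φ' s) ^ 2)) := by
  intro s hs
  have hn_one : 1 < n := by omega
  have h := catenoid_second_fundamental_form_norm_general (Nat.one_lt_cast.mpr hn_one) hIconv hpos
    (fun t ht => (hderiv1 t ht).hasDerivWithinAt)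
    (fun t ht => hode t ht ▸ (hderiv2 t ht).hasDerivWithinAt) h0I hs
  simpa only [hinit, hinit', rpow_two_mul_natCast_sub_one _ hn_one.le, rpow_neg_two_mul_natCast,
    zero_pow two_ne_zero, add_zero, div_one] using h
end

section
/- Let n ≥ 2 be an integer. Let h : Fin n → Fin n → Fin n → ℝ satisfy h i j k = h σ(i) σ(j) σ(k) for every permutation σ of the three positions (full symmetry), let λ : Fin n → ℝ satisfy ∑_i λ i = 0, and assume ∑_i h i i k = 0 for every k. Assume |A|² := ∑_i (λ i)² > 0. Define W = |A|^{-2}·∑_k (∑_i λ i · h i i k)², E₁ = ∑_{(i,j,k) pairwise distinct} (h i j k)², E₂ = (1/n)·∑_i ∑_{j ≠ i} ∑_{k ≠ i, k ≠ j} (h k k i − h j j i)², and E₃ = ((n+2)/(2n))·|A|^{-2}·∑_k ∑_{i ≠ j} (λ i · h j j k − λ j · h i i k)², where all sums over pairs of distinct indices are over ordered pairs. Then ∑_{i,j,k} (h i j k)² − W = (2/n)·W + E₁ + E₂ + E₃. -/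
open Finset

/-!
Put `D = ∑ₖ ∑ᵢ (h i i k)²` and `d = ∑ᵢ (h i i i)²`. Inclusion–exclusion on coinciding indices gives
`|∇A|² = E₁ + 3 D - 2 d`. Lagrange's identity, applied to the sequences `j ↦ 1` and `j ↦ h j j i` on
the indices `j ≠ i`, gives `n E₂ = 2 (n - 1) D - 2 n d`; applied to `l` and `i ↦ h i i k` on all
indices, it gives `n E₃ = (n + 2) (D - W)`. Eliminating `E₂` and `E₃` leaves a linear identity in
`E₁`, `D`, `d` and `W`.
-/

section FiniteSums

variable {ι M R : Type*}

lemma sum_triple_add_two_nsmul_diag [Fintype ι] [DecidableEq ι] [AddCommMonoid M]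
    (f : ι → ι → ι → M) :
    ∑ i, ∑ j, ∑ k, f i j k + 2 • ∑ i, f i i i
      = (∑ i, ∑ j, ∑ k, if i ≠ j ∧ i ≠ k ∧ j ≠ k then f i j k else 0)
        + ∑ i, ∑ k, f i i k + ∑ i, ∑ j, f i j i + ∑ i, ∑ j, f i j j := by
  have pointwise (i j k : ι) :
      f i j k + 2 • (if i = j then if i = k then f i i i else 0 else 0)
        = (if i ≠ j ∧ i ≠ k ∧ j ≠ k then f i j k else 0)
          + (if i = j then f i i k else 0) + (if i = k then f i j i else 0)
          + (if j = k then f i j j else 0) := by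
    by_cases hij : i = j <;> by_cases hik : i = k <;> by_cases hjk : j = k <;>
      simp_all [two_nsmul, add_assoc]
  have summed := sum_congr rfl fun i (_ : i ∈ univ) => sum_congr rfl fun j (_ : j ∈ univ) =>
    sum_congr rfl fun k (_ : k ∈ univ) => pointwise i j k
  simpa only [sum_add_distrib, ← smul_sum, sum_ite_irrel, sum_const_zero, sum_ite_eq, mem_univ,
    if_true] using summed

variable [CommRing R]

lemma lagrange_identity (s : Finset ι) (a b : ι → R) :
    ∑ i ∈ s, ∑ j ∈ s, (a i * b j - a j * b i) ^ 2
      = 2 * ((∑ i ∈ s, a i ^ 2) * (∑ i ∈ s, b i ^ 2) - (∑ i ∈ s, a i * b i) ^ 2) := by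
  have expand (i j : ι) : (a i * b j - a j * b i) ^ 2
      = a i ^ 2 * b j ^ 2 + b i ^ 2 * a j ^ 2 - 2 * ((a i * b i) * (a j * b j)) := by ring
  simp only [expand, sum_sub_distrib, sum_add_distrib, ← mul_sum, ← sum_mul]
  ring

variable [Fintype ι] [DecidableEq ι]

lemma sum_erase_sum_erase_sub_sq {a : ι → R} (ha : ∑ j, a j = 0) (i : ι) :
    ∑ j ∈ univ.erase i, ∑ k ∈ univ.erase i, (a k - a j) ^ 2
      = 2 * ((Fintype.card ι : R) - 1) * ∑ j, a j ^ 2 - 2 * Fintype.card ι * a i ^ 2 := by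
  have sum_one : ∑ _j ∈ univ.erase i, (1 : R) ^ 2 = Fintype.card ι - 1 := by
    simp [sum_erase_eq_sub (mem_univ i)]
  have sum_rest : ∑ j ∈ univ.erase i, a j = -a i := by
    rw [sum_erase_eq_sub (mem_univ i), ha, zero_sub]
  have lagrange := lagrange_identity (univ.erase i) (fun _ => 1) a
  simp only [one_mul] at lagrange
  rw [lagrange, sum_one, sum_rest, sum_erase_eq_sub (mem_univ i)]
  ring

end FiniteSums

section Errors

variable {ι R K : Type*} [Fintype ι] [DecidableEq ι] [CommRing R] [Field K]

/-- The quantity `W = |∇|A||²`, in terms of the principal curvatures `l` and the components `h`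
of `∇A`. -/
def gradOfNormSq (l : ι → K) (h : ι → ι → ι → K) : K :=
  (∑ i, l i ^ 2)⁻¹ * ∑ k, (∑ i, l i * h i i k) ^ 2

/-- The error term `E₁`: the components of `∇A` with three distinct indices. -/
def distinctError (h : ι → ι → ι → R) : R :=
  ∑ i, ∑ j, ∑ k, if i ≠ j ∧ i ≠ k ∧ j ≠ k then h i j k ^ 2 else 0

/-- The error term `E₂`: for each `i`, it measures how far the components `h j j i` with `j ≠ i`
are from being equal. -/
def diagonalError (h : ι → ι → ι → K) : K :=
  (1 / (Fintype.card ι : K)) *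
    ∑ i, ∑ j, ∑ k, if j ≠ i ∧ k ≠ i ∧ k ≠ j then (h k k i - h j j i) ^ 2 else 0

/-- The error term `E₃`: for each `k`, it measures how far the vector `i ↦ h i i k` is from being
proportional to `l`. -/
def proportionalityError (l : ι → K) (h : ι → ι → ι → K) : K :=
  (((Fintype.card ι : K) + 2) / (2 * (Fintype.card ι : K))) * (∑ i, l i ^ 2)⁻¹ *
    ∑ k, ∑ i, ∑ j, if i ≠ j then (l i * h j j k - l j * h i i k) ^ 2 else 0

lemma sum_sq_eq_distinctError_add {h : ι → ι → ι → R}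
    (hsymm1 : ∀ i j k, h i j k = h j i k) (hsymm2 : ∀ i j k, h i j k = h i k j) :
    ∑ i, ∑ j, ∑ k, h i j k ^ 2
      = distinctError h + 3 * ∑ k, ∑ i, h i i k ^ 2 - 2 * ∑ i, h i i i ^ 2 := by
  have outer_eq : ∑ i, ∑ j, h i j i ^ 2 = ∑ i, ∑ k, h i i k ^ 2 :=
    sum_congr rfl fun i _ => sum_congr rfl fun j _ => by rw [hsymm2 i j i]
  have right_eq : ∑ i, ∑ j, h i j j ^ 2 = ∑ k, ∑ i, h i i k ^ 2 :=
    sum_congr rfl fun i _ => sum_congr rfl fun j _ => by rw [hsymm1 i j j, hsymm2 j i j]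
  have incl_excl := sum_triple_add_two_nsmul_diag fun i j k => h i j k ^ 2
  rw [outer_eq, right_eq, sum_comm (f := fun i k => h i i k ^ 2), nsmul_eq_mul,
    Nat.cast_ofNat] at incl_excl
  rw [distinctError]
  linear_combination incl_excl

lemma diagonalError_eq {h : ι → ι → ι → K} (hcard : (Fintype.card ι : K) ≠ 0)
    (hcodazzi : ∀ k, ∑ i, h i i k = 0) :
    diagonalError h
      = 2 * ((Fintype.card ι : K) - 1) / Fintype.card ι * ∑ k, ∑ i, h i i k ^ 2
        - 2 * ∑ i, h i i i ^ 2 := by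
  have sum_off_index (i : ι) :
      (∑ j, ∑ k, if j ≠ i ∧ k ≠ i ∧ k ≠ j then (h k k i - h j j i) ^ 2 else 0)
        = ∑ j ∈ univ.erase i, ∑ k ∈ univ.erase i, (h k k i - h j j i) ^ 2 := by
    have drop_ne (j k : ι) :
        (if j ≠ i ∧ k ≠ i ∧ k ≠ j then (h k k i - h j j i) ^ 2 else 0)
          = if j ≠ i then if k ≠ i then (h k k i - h j j i) ^ 2 else 0 else 0 := by
      rcases eq_or_ne k j with rfl | hkj
      · simp
      · simp only [hkj, ne_eq, not_false_eq_true, and_true, ite_and]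
    simp only [drop_ne, ← filter_ne', sum_filter, sum_ite_irrel, sum_const_zero]
  simp only [diagonalError, sum_off_index,
    fun i => sum_erase_sum_erase_sub_sq (hcodazzi i) i, sum_sub_distrib, ← mul_sum]
  field_simp

lemma proportionalityError_eq {l : ι → K} {h : ι → ι → ι → K} (htwo : (2 : K) ≠ 0)
    (hA : ∑ i, l i ^ 2 ≠ 0) :
    proportionalityError l h
      = ((Fintype.card ι : K) + 2) / Fintype.card ι
        * (∑ k, ∑ i, h i i k ^ 2 - gradOfNormSq l h) := by
  have drop_ne (i j k : ι) :
      (if i ≠ j then (l i * h j j k - l j * h i i k) ^ 2 else 0)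
        = (l i * h j j k - l j * h i i k) ^ 2 := by
    rw [ite_eq_left_iff, not_ne_iff]
    rintro rfl
    ring
  simp only [proportionalityError, gradOfNormSq, drop_ne,
    fun k => lagrange_identity univ l fun i => h i i k, sum_sub_distrib, ← mul_sum]
  field_simp

theorem refined_simons_identity_general {l : ι → K} {h : ι → ι → ι → K}
    (htwo : (2 : K) ≠ 0) (hcard : (Fintype.card ι : K) ≠ 0)
    (hsymm1 : ∀ i j k, h i j k = h j i k) (hsymm2 : ∀ i j k, h i j k = h i k j)
    (hcodazzi : ∀ k, ∑ i, h i i k = 0) (hA : ∑ i, l i ^ 2 ≠ 0) :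
    ∑ i, ∑ j, ∑ k, h i j k ^ 2 - gradOfNormSq l h
      = 2 / (Fintype.card ι : K) * gradOfNormSq l h
        + distinctError h + diagonalError h + proportionalityError l h := by
  rw [sum_sq_eq_distinctError_add hsymm1 hsymm2, diagonalError_eq hcard hcodazzi,
    proportionalityError_eq htwo hA]
  field_simp
  ring

end Errors

/-- **The refined Simons identity (algebraic form).**
Let `n ≥ 2`, let `h i j k` be fully symmetric with `∑ᵢ h i i k = 0` for all `k`
(the covariant derivative of the second fundamental form in a diagonalizing frame),
and let `l` (the principal curvatures) satisfy `∑ᵢ l i = 0` with `|A|² = ∑ᵢ (l i)² > 0`.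
With `W = |A|⁻²·∑ₖ(∑ᵢ l i·h i i k)²` and the nonnegative error terms `E₁, E₂, E₃`,
one has `∑ h² − W = (2/n)·W + E₁ + E₂ + E₃`. -/
theorem refined_simons_identity
    (n : ℕ) (hn : 2 ≤ n)
    (h : Fin n → Fin n → Fin n → ℝ)
    (hsymm1 : ∀ i j k, h i j k = h j i k)
    (hsymm2 : ∀ i j k, h i j k = h i k j)
    (l : Fin n → ℝ)
    (htrace : ∑ i, l i = 0)
    (hcodazzi : ∀ k, ∑ i, h i i k = 0)
    (hA : 0 < ∑ i, (l i) ^ 2) :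
    (∑ i, ∑ j, ∑ k, (h i j k) ^ 2)
        - (∑ i, (l i) ^ 2)⁻¹ * ∑ k, (∑ i, l i * h i i k) ^ 2
      = (2 / (n : ℝ)) * ((∑ i, (l i) ^ 2)⁻¹ * ∑ k, (∑ i, l i * h i i k) ^ 2)
        + (∑ i, ∑ j, ∑ k, if i ≠ j ∧ i ≠ k ∧ j ≠ k then (h i j k) ^ 2 else 0)
        + (1 / (n : ℝ)) *
            (∑ i, ∑ j, ∑ k, if j ≠ i ∧ k ≠ i ∧ k ≠ j then (h k k i - h j j i) ^ 2 else 0)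
        + (((n : ℝ) + 2) / (2 * (n : ℝ))) * (∑ i, (l i) ^ 2)⁻¹ *
            (∑ k, ∑ i, ∑ j, if i ≠ j then (l i * h j j k - l j * h i i k) ^ 2 else 0) := by
  have hcard : (Fintype.card (Fin n) : ℝ) ≠ 0 := by
    rw [Fintype.card_fin]
    exact Nat.cast_ne_zero.mpr (by lia)
  simpa only [gradOfNormSq, distinctError, diagonalError, proportionalityError, Fintype.card_fin]
    using refined_simons_identity_general two_ne_zero hcard hsymm1 hsymm2 hcodazzi hA.ne'
end

section
/- Let n ≥ 2 be an integer. Let h : Fin n → Fin n → Fin n → ℝ satisfy h i j k = h σ(i) σ(j) σ(k) for every permutation σ of the three positions (full symmetry), let λ : Fin n → ℝ satisfy ∑_i λ i = 0, and assume ∑_i h i i k = 0 for every k. Then (∑_i (λ i)²)·(∑_{i,j,k} (h i j k)²) ≥ (1 + 2/n)·∑_k (∑_i λ i · h i i k)². -/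
open Finset

/-!
Fix `k` and put `a i = h i i k`, so that `∑ a i = 0`. Cauchy–Schwarz gives
`(∑ l i * a i)² ≤ |l|² |a|²`. By full symmetry each `h i i k` with `i ≠ k` occurs three times in
`|h|²`, so discarding the entries with three distinct indices leaves
`|h|² ≥ ∑ₖ (3 ∑ᵢ (h i i k)² - 2 (h k k k)²)`. Finally Cauchy–Schwarz applied to
`a k = -∑_{i ≠ k} a i` yields `a k² ≤ (1 - 1/n) |a|²`, whence `3 |a|² - 2 a k² ≥ (1 + 2/n) |a|²`.
-/

section Diagonals

variable {ι M : Type*} [Fintype ι] [AddCommMonoid M] [PartialOrder M] [IsOrderedAddMonoid M]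

lemma sum_diagonals_le_sum_add_two_nsmul {F : ι → ι → ι → M} (hF : ∀ i j k, 0 ≤ F i j k) :
    ∑ i, ∑ k, F i i k + ∑ i, ∑ j, F i j j + ∑ i, ∑ j, F i j i
      ≤ ∑ i, ∑ j, ∑ k, F i j k + 2 • ∑ i, F i i i := by
  classical
  have pointwise (i j k : ι) :
      (if i = j then F i j k else 0) + (if j = k then F i j k else 0)
        + (if i = k then F i j k else 0)
      ≤ F i j k + 2 • (if i = j then if j = k then F i j k else 0 else 0) := by
    have := hF i j k
    by_cases hij : i = j <;> by_cases hjk : j = k <;> by_cases hik : i = k <;>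
      simp_all [two_nsmul, add_assoc]
  have summed := sum_le_sum fun i (_ : i ∈ univ) ↦ sum_le_sum fun j (_ : j ∈ univ) ↦
    sum_le_sum fun k (_ : k ∈ univ) ↦ pointwise i j k
  simpa [sum_add_distrib, ← sum_nsmul, sum_ite_irrel] using summed

lemma three_nsmul_sum_diagonal_le_of_symmetric {F : ι → ι → ι → M} (hF : ∀ i j k, 0 ≤ F i j k)
    (hswap₁₂ : ∀ i j k, F i j k = F j i k) (hswap₂₃ : ∀ i j k, F i j k = F i k j) :
    3 • ∑ k, ∑ i, F i i k ≤ ∑ i, ∑ j, ∑ k, F i j k + 2 • ∑ k, F k k k := by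
  have sum_eq₁₂ : ∑ i, ∑ k, F i i k = ∑ k, ∑ i, F i i k := sum_comm
  have sum_eq₂₃ : ∑ i, ∑ j, F i j j = ∑ k, ∑ i, F i i k :=
    sum_congr rfl fun i _ ↦ sum_congr rfl fun j _ ↦ by rw [hswap₁₂, hswap₂₃]
  have sum_eq₁₃ : ∑ i, ∑ j, F i j i = ∑ k, ∑ i, F i i k := by
    rw [← sum_eq₁₂]
    exact sum_congr rfl fun i _ ↦ sum_congr rfl fun j _ ↦ hswap₂₃ i j i
  calc 3 • ∑ k, ∑ i, F i i k
      = ∑ i, ∑ k, F i i k + ∑ i, ∑ j, F i j j + ∑ i, ∑ j, F i j i := by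
        rw [sum_eq₁₂, sum_eq₂₃, sum_eq₁₃, succ_nsmul, two_nsmul]
    _ ≤ ∑ i, ∑ j, ∑ k, F i j k + 2 • ∑ k, F k k k := sum_diagonals_le_sum_add_two_nsmul hF

end Diagonals

lemma card_mul_sq_le_of_sum_eq_zero {ι R : Type*} [CommRing R] [LinearOrder R]
    [IsStrictOrderedRing R] {s : Finset ι} {a : ι → R} (ha : ∑ i ∈ s, a i = 0) {k : ι}
    (hk : k ∈ s) : #s * a k ^ 2 ≤ (#s - 1) * ∑ i ∈ s, a i ^ 2 := by
  classical
  have sum_others : ∑ i ∈ s.erase k, a i = -a k := by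
    rw [sum_erase_eq_sub hk, ha, zero_sub]
  have cauchy_schwarz := sq_sum_le_card_mul_sum_sq (s := s.erase k) (f := a)
  rw [sum_others, neg_sq, cast_card_erase_of_mem hk, sum_erase_eq_sub hk] at cauchy_schwarz
  linarith

section Simons

variable {ι K : Type*} [Fintype ι] [Field K] [LinearOrder K] [IsStrictOrderedRing K]

lemma one_add_two_div_card_mul_sum_sq_le {a : ι → K} (ha : ∑ i, a i = 0) (k : ι) :
    (1 + 2 / (Fintype.card ι : K)) * ∑ i, a i ^ 2 ≤ 3 * ∑ i, a i ^ 2 - 2 * a k ^ 2 := by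
  have card_pos : (0 : K) < Fintype.card ι :=
    Nat.cast_pos.mpr (Fintype.card_pos_iff.mpr ⟨k⟩)
  have entry_le := card_mul_sq_le_of_sum_eq_zero ha (mem_univ k)
  rw [card_univ] at entry_le
  refine le_of_mul_le_mul_left ?_ card_pos
  field_simp
  linarith

theorem simons_inequality_algebraic_general {h : ι → ι → ι → K}
    (hswap₁₂ : ∀ i j k, h i j k = h j i k) (hswap₂₃ : ∀ i j k, h i j k = h i k j)
    (l : ι → K) (hcodazzi : ∀ k, ∑ i, h i i k = 0) :
    (1 + 2 / (Fintype.card ι : K)) * ∑ k, (∑ i, l i * h i i k) ^ 2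
      ≤ (∑ i, l i ^ 2) * ∑ i, ∑ j, ∑ k, h i j k ^ 2 := by
  have sum_sq_ge : ∑ k, (3 * ∑ i, h i i k ^ 2 - 2 * h k k k ^ 2)
      ≤ ∑ i, ∑ j, ∑ k, h i j k ^ 2 := by
    have := three_nsmul_sum_diagonal_le_of_symmetric (F := fun i j k ↦ h i j k ^ 2)
      (fun i j k ↦ sq_nonneg _) (fun i j k ↦ by rw [hswap₁₂]) (fun i j k ↦ by rw [hswap₂₃])
    simpa [← mul_sum, sub_le_iff_le_add] using this
  calc (1 + 2 / (Fintype.card ι : K)) * ∑ k, (∑ i, l i * h i i k) ^ 2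
      ≤ (1 + 2 / (Fintype.card ι : K)) * ∑ k, (∑ i, l i ^ 2) * ∑ i, h i i k ^ 2 := by
        gcongr with k
        exact sum_mul_sq_le_sq_mul_sq univ l fun i ↦ h i i k
    _ = (∑ i, l i ^ 2) * ∑ k, (1 + 2 / (Fintype.card ι : K)) * ∑ i, h i i k ^ 2 := by
        simp only [← mul_sum]
        ring
    _ ≤ (∑ i, l i ^ 2) * ∑ k, (3 * ∑ i, h i i k ^ 2 - 2 * h k k k ^ 2) := by
        gcongr with k
        exact one_add_two_div_card_mul_sum_sq_le (hcodazzi k) k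
    _ ≤ (∑ i, l i ^ 2) * ∑ i, ∑ j, ∑ k, h i j k ^ 2 := by
        gcongr

end Simons

/-- **The algebraic Simons inequality (Schoen–Simon–Yau form).**
Let `n ≥ 2`, let `h i j k` be fully symmetric with `∑ᵢ h i i k = 0` for all `k`, and let
`l` satisfy `∑ᵢ l i = 0`.  Then
`(∑ᵢ (l i)²)·(∑ h²) ≥ (1 + 2/n)·∑ₖ(∑ᵢ l i·h i i k)²`,
i.e. `|A|²·|∇A|² ≥ (1 + 2/n)·|A|²·|∇|A||²`. -/
theorem simons_inequality_algebraic
    (n : ℕ) (hn : 2 ≤ n)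
    (h : Fin n → Fin n → Fin n → ℝ)
    (hsymm1 : ∀ i j k, h i j k = h j i k)
    (hsymm2 : ∀ i j k, h i j k = h i k j)
    (l : Fin n → ℝ)
    (htrace : ∑ i, l i = 0)
    (hcodazzi : ∀ k, ∑ i, h i i k = 0) :
    (∑ i, (l i) ^ 2) * (∑ i, ∑ j, ∑ k, (h i j k) ^ 2)
      ≥ (1 + 2 / (n : ℝ)) * ∑ k, (∑ i, l i * h i i k) ^ 2 := by
  simpa using simons_inequality_algebraic_general hsymm1 hsymm2 l hcodazzi
end

section
/- Let n ≥ 2 be an integer. Let h : Fin n → Fin n → Fin n → ℝ satisfy h i j k = h σ(i) σ(j) σ(k) for every permutation σ of the three positions (full symmetry) and ∑_i h i i k = 0 for every k, and let λ : Fin n → ℝ. Assume: (a) for every i and all j, k with j ≠ i, k ≠ i, j ≠ k one has h k k i = h j j i; (b) for all i, j, k one has λ i · h j j k = λ j · h i i k; and (c) there exist indices i₀ and j₀ ≠ i₀ with h j₀ j₀ i₀ ≠ 0. Then λ i₀ = −(n−1)·λ j for every j ≠ i₀. -/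
open Finset

/-!
Write `d k = h k k i₀`. By (a), `d` takes one value `c` away from `i₀`, and `c ≠ 0` by (c); a vector
of this form with sum zero is `c` times the vector with entry `-(n - 1)` at `i₀` and `1` elsewhere.
By (b), `l` is proportional to `d`, hence its entries are in the same ratio.
-/

section

variable {ι R : Type*} [Fintype ι]

lemma eq_neg_card_sub_one_mul_of_sum_eq_zero [Ring R] {d : ι → R} {i : ι} {c : R}
    (hsum : ∑ k, d k = 0) (hconst : ∀ k, k ≠ i → d k = c) :
    d i = -((Fintype.card ι : R) - 1) * c := by
  have hshift : ∑ k, (d k - c) = d i - c :=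
    Fintype.sum_eq_single i fun k hk => sub_eq_zero.mpr (hconst k hk)
  rw [sum_sub_distrib, hsum, sum_const, card_univ, nsmul_eq_mul] at hshift
  calc
    d i = (d i - c) + c := (sub_add_cancel _ _).symm
    _ = (0 - Fintype.card ι * c) + c := by rw [hshift]
    _ = -((Fintype.card ι : R) - 1) * c := by noncomm_ring

theorem E2_E3_vanishing_eigenvalue_structure_general [CommRing R] [IsCancelMulZero R]
    {h : ι → ι → ι → R} {l : ι → R} {i₀ j₀ : ι}
    (hcodazzi : ∑ i, h i i i₀ = 0)
    (ha : ∀ j k, j ≠ i₀ → k ≠ i₀ → j ≠ k → h k k i₀ = h j j i₀)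
    (hb : ∀ j, l i₀ * h j j i₀ = l j * h i₀ i₀ i₀)
    (hne : j₀ ≠ i₀) (hc : h j₀ j₀ i₀ ≠ 0) :
    ∀ j, j ≠ i₀ → l i₀ = -((Fintype.card ι : R) - 1) * l j := by
  intro j hj
  have hconst : ∀ k, k ≠ i₀ → h k k i₀ = h j₀ j₀ i₀ := by
    intro k hk
    obtain rfl | hjk := eq_or_ne j₀ k
    · rfl
    · exact ha j₀ k hne hk hjk
  have hdiag : h i₀ i₀ i₀ = -((Fintype.card ι : R) - 1) * h j₀ j₀ i₀ :=
    eq_neg_card_sub_one_mul_of_sum_eq_zero (d := fun k => h k k i₀) hcodazzi hconst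
  refine mul_right_cancel₀ hc ?_
  calc
    l i₀ * h j₀ j₀ i₀ = l i₀ * h j j i₀ := by rw [hconst j hj]
    _ = l j * h i₀ i₀ i₀ := hb j
    _ = l j * (-((Fintype.card ι : R) - 1) * h j₀ j₀ i₀) := by rw [hdiag]
    _ = -((Fintype.card ι : R) - 1) * l j * h j₀ j₀ i₀ := by ring

end

/-- **Consequence of the vanishing of `E₂` and `E₃`: the catenoid eigenvalue structure.**
Let `n ≥ 2`, let `h i j k` be fully symmetric with `∑ᵢ h i i k = 0` for all `k`, and let
`l` be given.  Assume (a) `h k k i = h j j i` whenever `j ≠ i`, `k ≠ i`, `j ≠ k`;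
(b) `l i·h j j k = l j·h i i k` for all `i, j, k`; and (c) `h j₀ j₀ i₀ ≠ 0` for some
`j₀ ≠ i₀`.  Then `l i₀ = −(n−1)·l j` for every `j ≠ i₀`. -/
theorem E2_E3_vanishing_eigenvalue_structure
    (n : ℕ) (hn : 2 ≤ n)
    (h : Fin n → Fin n → Fin n → ℝ)
    (hsymm1 : ∀ i j k, h i j k = h j i k)
    (hsymm2 : ∀ i j k, h i j k = h i k j)
    (hcodazzi : ∀ k, ∑ i, h i i k = 0)
    (l : Fin n → ℝ)
    (ha : ∀ i j k, j ≠ i → k ≠ i → j ≠ k → h k k i = h j j i)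
    (hb : ∀ i j k, l i * h j j k = l j * h i i k)
    (i₀ j₀ : Fin n) (hne : j₀ ≠ i₀) (hc : h j₀ j₀ i₀ ≠ 0) :
    ∀ j, j ≠ i₀ → l i₀ = -((n : ℝ) - 1) * l j := by
  simpa only [Fintype.card_fin] using
    E2_E3_vanishing_eigenvalue_structure_general (hcodazzi i₀) (ha i₀) (hb i₀ · i₀) hne hc
end
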